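/- arXiv:1905.00514 — 3 statements merged into one kernel-verified Lean document; each statement's English description precedes it below -/
import Mathlib

section
/- Let X be a real Hilbert space, 𝓘 an ideal on ℕ, and x : ℕ → X a sequence such that the closure of {x n : n ∈ E} is compact for some E ∈ 𝓘*. For each y ∈ X, let m(y) denote the supremum (which is attained) of the set of 𝓘-cluster points of the real sequence n ↦ ‖x n - y‖. Then core_x(𝓘) = ⋂_{y ∈ X} {h ∈ X : ‖h - y‖ ≤ m(y)}. -/
open Filter Topology

/-!
In an inner product space a closed half-space containing a bounded set `s` but not the point `h` can
be bent into a large closed ball with the same property. As the closed convex hull of `s` is the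
intersection of the closed half-spaces containing `s`, it is therefore also the intersection of the
closed balls containing `s`. Hence `h` lies in the core of `x` iff every closed ball which
eventually contains `x` contains `h`. The least such radius at a given center `y` is
`limsup ‖x n - y‖`, which is the greatest cluster point of `‖x n - y‖`.
-/

section Separation

open scoped InnerProductSpace

theorem denseRange_toDualMap (𝕜 E : Type*) [RCLike 𝕜] [SeminormedAddCommGroup E]
    [InnerProductSpace 𝕜 E] : DenseRange (InnerProductSpace.toDualMap 𝕜 E) := by
  let coe : E →L[𝕜] UniformSpace.Completion E := UniformSpace.Completion.toComplL
  let restrict (w : UniformSpace.Completion E) : StrongDual 𝕜 E :=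
    (InnerProductSpace.toDualMap 𝕜 _ w).comp coe
  have restrict_surjective : Function.Surjective restrict := fun f ↦ by
    refine ⟨(InnerProductSpace.toDual 𝕜 _).symm f.fromCompletion, ?_⟩
    ext z
    simp [restrict, coe]
  have restrict_continuous : Continuous restrict := by fun_prop
  have restrict_coe : restrict ∘ coe = InnerProductSpace.toDualMap 𝕜 E := by
    ext v z
    simp [restrict, coe]
  rw [← restrict_coe]
  exact restrict_surjective.denseRange.comp UniformSpace.Completion.denseRange_coe
    restrict_continuous

variable {X : Type*} [SeminormedAddCommGroup X] [InnerProductSpace ℝ X] {s : Set X} {h : X}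

theorem exists_forall_le_inner_sub_of_notMem_closedConvexHull (hs : Bornology.IsBounded s)
    (hh : h ∉ closedConvexHull ℝ s) : ∃ v : X, ∃ c > 0, ∀ z ∈ s, c ≤ ⟪v, h - z⟫_ℝ := by
  obtain ⟨f, u, hfs, hfh⟩ :=
    geometric_hahn_banach_closed_point convex_closedConvexHull isClosed_closedConvexHull hh
  obtain ⟨R, hR, hsR⟩ := hs.subset_closedBall_lt 0 h
  -- `f` need not be an inner product, but is uniformly close to one on a ball containing `s`.
  obtain ⟨v, hv⟩ := (denseRange_toDualMap ℝ X).exists_dist_lt f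
    (show 0 < (f h - u) / (2 * R) from div_pos (sub_pos.2 hfh) (by positivity))
  refine ⟨v, (f h - u) / 2, half_pos (sub_pos.2 hfh), fun z hz ↦ ?_⟩
  have separated : f h - u ≤ f (h - z) := by
    rw [map_sub]
    linarith [hfs z (subset_closedConvexHull hz)]
  have approximated : f (h - z) - ⟪v, h - z⟫_ℝ ≤ (f h - u) / 2 :=
    calc f (h - z) - ⟪v, h - z⟫_ℝ
        ≤ ‖(f - InnerProductSpace.toDualMap ℝ X v) (h - z)‖ := Real.le_norm_self _
      _ ≤ (f h - u) / (2 * R) * R := by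
        refine ContinuousLinearMap.le_of_opNorm_le_of_le _ (dist_eq_norm f _ ▸ hv.le) ?_
        rw [← dist_eq_norm, dist_comm]
        exact hsR hz
      _ = (f h - u) / 2 := by field_simp
  linarith

theorem exists_subset_closedBall_lt_dist_of_le_inner_sub (hs : Bornology.IsBounded s) {v : X}
    {c : ℝ} (hc : 0 < c) (hv : ∀ z ∈ s, c ≤ ⟪v, h - z⟫_ℝ) :
    ∃ y : X, ∃ r < dist h y, s ⊆ Metric.closedBall y r := by
  obtain rfl | ⟨z₀, hz₀⟩ := s.eq_empty_or_nonempty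
  · exact ⟨h, -1, by simp, Set.empty_subset _⟩
  obtain ⟨R, hR, hsR⟩ := hs.subset_closedBall_lt 0 h
  have v_pos : 0 < ‖v‖ := by
    refine pos_of_mul_pos_left ?_ (norm_nonneg (h - z₀))
    exact (hc.trans_le (hv z₀ hz₀)).trans_le (real_inner_le_norm _ _)
  -- Seen from `h - t • v`, the squared distance of `z ∈ s` is that of `h`, less
  -- `2 * t * ⟪v, h - z⟫`, plus `‖h - z‖ ^ 2 ≤ R ^ 2`; this `t` makes the gain at least `2 * R ^ 2`.
  let t := R ^ 2 / c
  have t_pos : 0 < t := by positivity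
  have htc : t * c = R ^ 2 := div_mul_cancel₀ _ hc.ne'
  refine ⟨h - t • v, √((t * ‖v‖) ^ 2 - R ^ 2), ?_, fun z hz ↦ ?_⟩
  · rw [dist_self_sub_right, norm_smul, Real.norm_of_nonneg t_pos.le, Real.sqrt_lt' (by positivity)]
    exact sub_lt_self _ (by positivity)
  · have hzR : ‖h - z‖ ^ 2 ≤ R ^ 2 := by
      gcongr
      rw [← dist_eq_norm, dist_comm]
      exact hsR hz
    rw [Metric.mem_closedBall, dist_comm, dist_eq_norm]
    apply Real.le_sqrt_of_sq_le
    calc ‖h - t • v - z‖ ^ 2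
        = ‖t • v - (h - z)‖ ^ 2 := by rw [← norm_neg]; congr 2; abel
      _ = (t * ‖v‖) ^ 2 - 2 * (t * ⟪v, h - z⟫_ℝ) + ‖h - z‖ ^ 2 := by
        rw [norm_sub_sq_real, norm_smul, Real.norm_of_nonneg t_pos.le, real_inner_smul_left]
      _ ≤ (t * ‖v‖) ^ 2 - 2 * (t * c) + R ^ 2 := by
        gcongr
        exact hv z hz
      _ = (t * ‖v‖) ^ 2 - R ^ 2 := by rw [htc]; ring

theorem mem_closedConvexHull_iff_forall_mem_closedBall (hs : Bornology.IsBounded s) :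
    h ∈ closedConvexHull ℝ s ↔
      ∀ y r, s ⊆ Metric.closedBall y r → h ∈ Metric.closedBall y r := by
  refine ⟨fun hh y r hsr ↦ ?_, fun hballs ↦ ?_⟩
  · exact closedConvexHull_min hsr (convex_closedBall y r) Metric.isClosed_closedBall hh
  · by_contra hh
    obtain ⟨v, c, hc, hv⟩ := exists_forall_le_inner_sub_of_notMem_closedConvexHull hs hh
    obtain ⟨y, r, hr, hsr⟩ := exists_subset_closedBall_lt_dist_of_le_inner_sub hs hc hv
    exact hr.not_ge (hballs y r hsr)

end Separation

theorem le_sSup_mapClusterPt_iff {ι α : Type*} [ConditionallyCompleteLinearOrder α]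
    [TopologicalSpace α] [OrderTopology α] {F : Filter ι} [F.NeBot] {u : ι → α} {a : α}
    (hbelow : IsBoundedUnder (· ≥ ·) F u) (habove : IsBoundedUnder (· ≤ ·) F u) :
    a ≤ sSup {t | MapClusterPt t F u} ↔ ∀ r, (∀ᶠ n in F, u n ≤ r) → a ≤ r := by
  rw [(isGreatest_mapClusterPt_limsup hbelow.isCobounded_le habove).csSup_eq]
  exact le_csInf_iff hbelow.isCobounded_le habove

section Core

variable {ι X : Type*} [SeminormedAddCommGroup X] [InnerProductSpace ℝ X]

/-- The core of a family `x` along a filter `F`: the `𝓘`-core when `F` is the dual filter of an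
ideal `𝓘`. -/
def icore (F : Filter ι) (x : ι → X) : Set X :=
  ⋂ E ∈ F, closedConvexHull ℝ (x '' E)

theorem mem_icore_iff_forall_eventually_dist_le {F : Filter ι} {x : ι → X}
    (hx : ∃ E ∈ F, Bornology.IsBounded (x '' E)) {h : X} :
    h ∈ icore F x ↔ ∀ y r, (∀ᶠ n in F, dist (x n) y ≤ r) → dist h y ≤ r := by
  simp only [icore, Set.mem_iInter]
  refine ⟨fun hh y r hr ↦ ?_, fun hh E hE ↦ ?_⟩
  · exact closedConvexHull_min (Set.image_subset_iff.2 fun _ hn ↦ hn) (convex_closedBall y r)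
      Metric.isClosed_closedBall (hh _ hr)
  · obtain ⟨E₀, hE₀, hbdd⟩ := hx
    refine (closedConvexHull ℝ).monotone (Set.image_mono (Set.inter_subset_left (t := E₀))) ?_
    rw [mem_closedConvexHull_iff_forall_mem_closedBall
      (hbdd.subset (Set.image_mono Set.inter_subset_right))]
    exact fun y r hr ↦ hh y r (mem_of_superset (inter_mem hE hE₀) (Set.image_subset_iff.1 hr))

theorem icore_eq_iInter_balls_general (F : Filter ι) [F.NeBot] (x : ι → X)
    (hx : ∃ E ∈ F, Bornology.IsBounded (x '' E)) :
    icore F x =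
      ⋂ y : X, {h : X | ‖h - y‖ ≤ sSup {t : ℝ | MapClusterPt t F (fun n => ‖x n - y‖)}} := by
  ext h
  rw [mem_icore_iff_forall_eventually_dist_le hx, Set.mem_iInter]
  refine forall_congr' fun y ↦ ?_
  have bounded_below : IsBoundedUnder (· ≥ ·) F fun n ↦ ‖x n - y‖ :=
    isBoundedUnder_of ⟨0, fun _ ↦ norm_nonneg _⟩
  have bounded_above : IsBoundedUnder (· ≤ ·) F fun n ↦ ‖x n - y‖ := by
    obtain ⟨E, hE, hbdd⟩ := hx
    obtain ⟨R, hR⟩ := hbdd.subset_closedBall y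
    refine isBoundedUnder_of_eventually_le (a := R) ?_
    filter_upwards [hE] with n hn
    exact dist_eq_norm (x n) y ▸ hR (Set.mem_image_of_mem x hn)
  simp only [dist_eq_norm]
  exact (le_sSup_mapClusterPt_iff bounded_below bounded_above).symm

end Core

/-- Theorem 2.5: for a sequence `x` in a real Hilbert space whose trace on some set `E`
of the dual filter `F` of the ideal `𝓘` has compact closure, the `𝓘`-core of `x` equals
the intersection, over all `y`, of the closed balls centered at `y` with radius
`m(y) = sSup Γ_{‖x n - y‖}(𝓘)` (this supremum being attained). -/
theorem icore_eq_iInter_balls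
    {X : Type*} [NormedAddCommGroup X] [InnerProductSpace ℝ X] [CompleteSpace X]
    (F : Filter ℕ) (hF : F ≤ Filter.cofinite) [F.NeBot]
    (x : ℕ → X) (hx : ∃ E ∈ F, IsCompact (closure (x '' E))) :
    ⋂ E ∈ F, closedConvexHull ℝ (x '' E) =
      ⋂ y : X, {h : X | ‖h - y‖ ≤ sSup {t : ℝ | MapClusterPt t F (fun n => ‖x n - y‖)}} := by
  obtain ⟨E, hE, hcompact⟩ := hx
  exact icore_eq_iInter_balls_general F x ⟨E, hE, hcompact.isBounded.subset subset_closure⟩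
end

section
/- Let 𝒵 be the ideal of asymptotic density zero subsets of ℕ, i.e., A ∈ 𝒵 iff (|A ∩ [1,n]|)/n → 0 as n → ∞, and let x : ℕ → ℝ be the sequence x n = (-1)^n · n. Then the 𝒵-core of x is all of ℝ, while the set of 𝒵-cluster points of x is empty: core_x(𝒵) = ℝ and Γ_x(𝒵) = ∅. -/
open Filter Topology

open scoped Classical

/-- A set `A ⊆ ℕ` has asymptotic density zero: `|A ∩ [1, n]| / n → 0`. -/
def DensityZero (A : Set ℕ) : Prop :=
  Tendsto (fun n : ℕ => (((Finset.Icc 1 n).filter (· ∈ A)).card : ℝ) / n) atTop (𝓝 0)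

/-!
Complements of density-zero sets form a filter finer than the cofinite one, and the core and the
cluster points are notions attached to this filter. Even and odd indices both have density `1/2`, so
every set in the filter contains arbitrarily large indices of each parity; the closed convex hull of
the corresponding values is then the whole line. On the other hand `|x n| = n → ∞`, so no
subsequence accumulates anywhere.
-/

namespace DensityZero

variable {A B : Set ℕ}

lemma mono (hB : DensityZero B) (hAB : A ⊆ B) : DensityZero A :=
  squeeze_zero (fun _ => by positivity) (fun n => by gcongr) hB

lemma union (hA : DensityZero A) (hB : DensityZero B) : DensityZero (A ∪ B) := by
  refine squeeze_zero (fun _ => by positivity) (fun n => ?_) (by simpa using hA.add hB)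
  rw [← add_div]
  gcongr
  simp only [Set.mem_union, Finset.filter_or]
  exact_mod_cast Finset.card_union_le _ _

lemma of_finite (hA : A.Finite) : DensityZero A := by
  refine squeeze_zero (fun _ => by positivity) (fun n => ?_)
    (tendsto_const_div_atTop_nhds_zero_nat (hA.toFinset.card : ℝ))
  gcongr
  intro k hk
  exact hA.mem_toFinset.2 (Finset.mem_filter.1 hk).2

end DensityZero

lemma card_filter_modEq_Icc_one_mul {m : ℕ} (hm : 0 < m) (r k : ℕ)
    [DecidablePred (· ≡ r [MOD m])] :
    ((Finset.Icc 1 (m * k)).filter (· ≡ r [MOD m])).card = k := by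
  have hm' : (m : ℚ) ≠ 0 := by positivity
  have hshift : ((m * k : ℕ) - r : ℚ) / m = k + (0 - r) / m := by
    push_cast
    field_simp
    ring
  have hcard := Nat.Ioc_filter_modEq_card 0 (m * k) hm r
  rw [hshift, Int.floor_natCast_add, Nat.cast_zero, add_sub_cancel_right,
    max_eq_left (Int.natCast_nonneg k)] at hcard
  rw [← zero_add 1, Finset.Icc_add_one_left_eq_Ioc]
  convert Nat.cast_injective hcard

lemma not_densityZero_setOf_modEq {m : ℕ} (hm : 0 < m) (r : ℕ) :
    ¬ DensityZero {n | n ≡ r [MOD m]} := by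
  intro h
  have hmul : Tendsto (m * ·) atTop atTop := tendsto_id.const_mul_atTop' hm
  have hzero : (m : ℝ)⁻¹ = 0 := by
    refine tendsto_nhds_unique_of_eventuallyEq tendsto_const_nhds (h.comp hmul) ?_
    filter_upwards [eventually_gt_atTop 0] with k hk
    simp only [Function.comp_apply]
    rw [card_filter_modEq_Icc_one_mul hm]
    push_cast
    field_simp
  exact inv_ne_zero (Nat.cast_ne_zero.2 hm.ne') hzero

/-- The dual filter `𝒵*` of the ideal `𝒵` of density-zero sets: `E` belongs to it when `Eᶜ` has
density zero. -/
def densityFilter : Filter ℕ :=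
  comk DensityZero (.of_finite Set.finite_empty) (fun _ hB _ hAB => hB.mono hAB)
    (fun _ hA _ hB => hA.union hB)

lemma mem_densityFilter {E : Set ℕ} : E ∈ densityFilter ↔ DensityZero Eᶜ :=
  mem_comk

lemma densityFilter_le_atTop : densityFilter ≤ atTop := by
  rw [← Nat.cofinite_eq_atTop]
  exact fun _ hE => mem_densityFilter.2 (.of_finite hE)

lemma frequently_densityFilter {p : ℕ → Prop} :
    (∃ᶠ n in densityFilter, p n) ↔ ¬ DensityZero {n | p n} := by
  rw [Filter.Frequently, Filter.Eventually, mem_densityFilter, Set.compl_ofPred]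
  simp only [not_not]

lemma frequently_even_densityFilter : ∃ᶠ n in densityFilter, Even n :=
  (frequently_densityFilter.2 (not_densityZero_setOf_modEq two_pos 0)).mono
    fun _ hn => Nat.even_iff.2 hn

lemma frequently_odd_densityFilter : ∃ᶠ n in densityFilter, Odd n :=
  (frequently_densityFilter.2 (not_densityZero_setOf_modEq two_pos 1)).mono
    fun _ hn => Nat.odd_iff.2 hn

lemma mapClusterPt_densityFilter {X : Type*} [TopologicalSpace X] {x : ℕ → X} {ℓ : X} :
    MapClusterPt ℓ densityFilter x ↔ ∀ U ∈ 𝓝 ℓ, ¬ DensityZero {n | x n ∈ U} := by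
  simp only [mapClusterPt_iff_frequently, frequently_densityFilter]

/-- The core of `x` along `F`: the intersection of the closed convex hulls of the images of the
members of `F`. For `𝕜 = ℝ` and `F = 𝓘*` dual to an ideal `𝓘`, it is `core_x(𝓘)`. -/
def filterCore (𝕜 : Type*) {ι E : Type*} [Semiring 𝕜] [PartialOrder 𝕜] [AddCommGroup E]
    [Module 𝕜 E] [TopologicalSpace E] (F : Filter ι) (x : ι → E) : Set E :=
  ⋂ s ∈ F, closedConvexHull 𝕜 (x '' s)

lemma filterCore_densityFilter {𝕜 E : Type*} [Semiring 𝕜] [PartialOrder 𝕜] [AddCommGroup E]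
    [Module 𝕜 E] [TopologicalSpace E] {x : ℕ → E} :
    filterCore 𝕜 densityFilter x =
      ⋂ s ∈ {s : Set ℕ | DensityZero sᶜ}, closedConvexHull 𝕜 (x '' s) := by
  simp only [filterCore, mem_densityFilter, Set.mem_ofPred_eq]

lemma filterCore_eq_univ {𝕜 ι : Type*} [Field 𝕜] [LinearOrder 𝕜] [IsStrictOrderedRing 𝕜]
    [TopologicalSpace 𝕜] {F : Filter ι} {x : ι → 𝕜}
    (h_ge : ∀ c, ∃ᶠ i in F, c ≤ x i) (h_le : ∀ c, ∃ᶠ i in F, x i ≤ c) :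
    filterCore 𝕜 F x = Set.univ := by
  refine Set.eq_univ_of_forall fun y => Set.mem_iInter₂.2 fun s hs => ?_
  obtain ⟨i, hxi, his⟩ := ((h_le y).and_eventually hs).exists
  obtain ⟨j, hxj, hjs⟩ := ((h_ge y).and_eventually hs).exists
  have mem_hull {k : ι} (hk : k ∈ s) : x k ∈ closedConvexHull 𝕜 (x '' s) :=
    subset_closedConvexHull (Set.mem_image_of_mem x hk)
  exact convex_closedConvexHull.ordConnected.out (mem_hull his) (mem_hull hjs) ⟨hxi, hxj⟩

lemma not_mapClusterPt_of_tendsto_cocompact {ι X : Type*} [TopologicalSpace X]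
    [WeaklyLocallyCompactSpace X] {F : Filter ι} {x : ι → X} (hx : Tendsto x F (cocompact X))
    (ℓ : X) : ¬ MapClusterPt ℓ F x := fun h =>
  h.ne ((disjoint_nhds_cocompact ℓ).mono_right hx).eq_bot

section Alternating

variable {F : Filter ℕ}

lemma frequently_le_neg_one_pow_mul {R : Type*} [Ring R] [Preorder R] {a : ℕ → R}
    (hF : ∃ᶠ n in F, Even n) (ha : Tendsto a F atTop) (c : R) :
    ∃ᶠ n in F, c ≤ (-1) ^ n * a n :=
  (hF.and_eventually (ha.eventually_ge_atTop c)).mono fun n ⟨hn, hc⟩ => by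
    rwa [hn.neg_one_pow, one_mul]

lemma frequently_neg_one_pow_mul_le {R : Type*} [Ring R] [PartialOrder R] [IsOrderedAddMonoid R]
    {a : ℕ → R} (hF : ∃ᶠ n in F, Odd n) (ha : Tendsto a F atTop) (c : R) :
    ∃ᶠ n in F, (-1) ^ n * a n ≤ c :=
  (hF.and_eventually (ha.eventually_ge_atTop (-c))).mono fun n ⟨hn, hc⟩ => by
    rw [hn.neg_one_pow, neg_one_mul]
    exact neg_le.1 hc

lemma tendsto_neg_one_pow_mul_cocompact {a : ℕ → ℝ} (ha : Tendsto a F atTop) :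
    Tendsto (fun n => (-1) ^ n * a n) F (cocompact ℝ) := by
  rw [← Metric.cobounded_eq_cocompact, ← tendsto_norm_atTop_iff_cobounded]
  simpa [Function.comp_def] using tendsto_abs_atTop_atTop.comp ha

end Alternating

/-- Example after Theorem 2.2: for the sequence `x n = (-1)^n * n`, the `𝒵`-core is all
of `ℝ` while the set of `𝒵`-cluster points is empty, where `𝒵` is the ideal of
asymptotic density zero sets. -/
theorem icore_univ_clusterPts_empty_example :
    (⋂ E ∈ {E : Set ℕ | DensityZero Eᶜ},
        closedConvexHull ℝ ((fun n : ℕ => (-1 : ℝ) ^ n * n) '' E)) = Set.univ ∧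
      {ℓ : ℝ | ∀ U ∈ 𝓝 ℓ, ¬ DensityZero {n : ℕ | (-1 : ℝ) ^ n * n ∈ U}} = ∅ := by
  have hn : Tendsto (fun n : ℕ => (n : ℝ)) densityFilter atTop :=
    tendsto_natCast_atTop_atTop.mono_left densityFilter_le_atTop
  constructor
  · rw [← filterCore_densityFilter]
    exact filterCore_eq_univ (frequently_le_neg_one_pow_mul frequently_even_densityFilter hn)
      (frequently_neg_one_pow_mul_le frequently_odd_densityFilter hn)
  · refine Set.eq_empty_of_forall_notMem fun ℓ hℓ => ?_
    exact not_mapClusterPt_of_tendsto_cocompact (tendsto_neg_one_pow_mul_cocompact hn) ℓ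
      (mapClusterPt_densityFilter.2 hℓ)
end

section
/- Let x : ℕ × ℕ → ℝ^k be a bounded double sequence (∃ C, ∀ p, ‖x p‖ ≤ C). Then the P-core of x equals the convex hull of the set of Pringsheim cluster points of x: ⋂_{E ∈ atTop ×ˢ atTop} closedConvexHull ℝ (x '' E) = convexHull ℝ {ℓ : MapClusterPt ℓ (atTop ×ˢ atTop) x}. -/
open Filter Topology

/-!
A point outside the closed convex hull of the cluster points is strictly separated from it by a
closed half-space. By compactness the family eventually stays in the interior of that half-space, so
the point is not in the core; hence the core is the *closed* convex hull of the cluster points. In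
finite dimension, Carathéodory's theorem makes the convex hull of the compact set of cluster points
compact, so taking the closure adds nothing.
-/

section ConvexHull

/-- The set of convex combinations of `n` points of `s`, repetitions and zero weights allowed.
Keeping `n` fixed makes it the continuous image of a product of compact sets when `s` is compact. -/
def convexCombinations (𝕜 : Type*) {E : Type*} [Semiring 𝕜] [PartialOrder 𝕜] [AddCommMonoid E]
    [Module 𝕜 E] (n : ℕ) (s : Set E) : Set E :=
  Set.image2 (fun (w : Fin n → 𝕜) (z : Fin n → E) ↦ ∑ i, w i • z i)
    (stdSimplex 𝕜 (Fin n)) (Set.univ.pi fun _ ↦ s)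

variable (𝕜 : Type*) {E : Type*} [Field 𝕜] [LinearOrder 𝕜] [IsStrictOrderedRing 𝕜]
  [AddCommGroup E] [Module 𝕜 E]

theorem convexCombinations_subset_convexHull (n : ℕ) (s : Set E) :
    convexCombinations 𝕜 n s ⊆ convexHull 𝕜 s := by
  rintro _ ⟨w, hw, z, hz, rfl⟩
  exact (convex_convexHull 𝕜 s).sum_mem (fun i _ ↦ hw.1 i) hw.2
    fun i _ ↦ subset_convexHull 𝕜 s (hz i (Set.mem_univ i))

theorem convexHull_eq_biUnion_convexCombinations [FiniteDimensional 𝕜 E] (s : Set E) :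
    convexHull 𝕜 s =
      ⋃ n ∈ Set.Iic (Module.finrank 𝕜 E + 1), convexCombinations 𝕜 n s := by
  refine Set.Subset.antisymm (fun y hy ↦ ?_)
    (Set.iUnion₂_subset fun n _ ↦ convexCombinations_subset_convexHull 𝕜 n s)
  obtain ⟨ι, _, z, w, hzs, hz, hw, hw_sum, rfl⟩ := eq_pos_convex_span_of_mem_convexHull hy
  have hcard : Fintype.card ι ≤ Module.finrank 𝕜 E + 1 :=
    hz.card_le_finrank_succ.trans (Nat.succ_le_succ (Submodule.finrank_le _))
  let e := (Fintype.equivFin ι).symm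
  exact Set.mem_biUnion hcard ⟨w ∘ e, ⟨fun i ↦ (hw _).le, (e.sum_comp w).trans hw_sum⟩,
    z ∘ e, fun i _ ↦ hzs ⟨_, rfl⟩, e.sum_comp fun i ↦ w i • z i⟩

variable [TopologicalSpace 𝕜] [OrderClosedTopology 𝕜] [CompactIccSpace 𝕜] [ContinuousAdd 𝕜]
  [TopologicalSpace E] [ContinuousAdd E] [ContinuousSMul 𝕜 E] {s : Set E}

theorem isCompact_convexCombinations (n : ℕ) (hs : IsCompact s) :
    IsCompact (convexCombinations 𝕜 n s) := by
  rw [convexCombinations, ← Set.image_uncurry_prod]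
  refine ((isCompact_stdSimplex 𝕜 (Fin n)).prod (isCompact_univ_pi fun _ ↦ hs)).image ?_
  simp only [Function.uncurry_def]
  fun_prop

theorem isCompact_convexHull [FiniteDimensional 𝕜 E] (hs : IsCompact s) :
    IsCompact (convexHull 𝕜 s) := by
  rw [convexHull_eq_biUnion_convexCombinations]
  exact (Set.finite_Iic _).isCompact_biUnion fun n _ ↦ isCompact_convexCombinations 𝕜 n hs

end ConvexHull

theorem locallyConvexSpace_of_finiteDimensional {E : Type*} [AddCommGroup E] [Module ℝ E]
    [TopologicalSpace E] [IsTopologicalAddGroup E] [ContinuousSMul ℝ E] [T2Space E]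
    [FiniteDimensional ℝ E] : LocallyConvexSpace ℝ E :=
  IsInducing.locallyConvexSpace (f := (toEuclidean (E := E)).toLinearMap)
    toEuclidean.toHomeomorph.isInducing

theorem isCompact_setOfPred_mapClusterPt {ι X : Type*} [TopologicalSpace X] [R1Space X]
    {F : Filter ι} {x : ι → X} {K : Set X} (hK : IsCompact K) (hx : ∀ᶠ i in F, x i ∈ K) :
    IsCompact {ℓ | MapClusterPt ℓ F x} :=
  hK.closure.of_isClosed_subset isClosed_setOfPred_clusterPt
    fun _ hℓ ↦ hℓ.clusterPt.mem_closure_of_mem K hx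

section Core

variable {ι 𝕜 E : Type*} {F : Filter ι} {x : ι → E} {K : Set E}

theorem closedConvexHull_mapClusterPt_subset_iInter [Semiring 𝕜] [PartialOrder 𝕜]
    [AddCommGroup E] [Module 𝕜 E] [TopologicalSpace E] :
    closedConvexHull 𝕜 {ℓ | MapClusterPt ℓ F x} ⊆ ⋂ s ∈ F, closedConvexHull 𝕜 (x '' s) :=
  Set.subset_iInter₂ fun _ hs ↦ closedConvexHull_min
    (fun _ hℓ ↦ closure_subset_closedConvexHull <|
      hℓ.clusterPt.mem_closure_of_mem _ (image_mem_map hs))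
    convex_closedConvexHull isClosed_closedConvexHull

theorem iInter_closedConvexHull_image_subset_halfSpace [Semiring 𝕜] [LinearOrder 𝕜]
    [IsStrictOrderedRing 𝕜] [TopologicalSpace 𝕜] [OrderClosedTopology 𝕜] [AddCommGroup E]
    [Module 𝕜 E] [TopologicalSpace E] (f : E →L[𝕜] 𝕜) {u : 𝕜}
    (hK : IsCompact K) (hx : ∀ᶠ i in F, x i ∈ K) (hf : ∀ ℓ, MapClusterPt ℓ F x → f ℓ < u) :
    ⋂ s ∈ F, closedConvexHull 𝕜 (x '' s) ⊆ {y | f y ≤ u} := by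
  have hlt : {i | f (x i) < u} ∈ F :=
    hK.adherence_nhdset (le_principal_iff.2 hx) (isOpen_Iio.preimage f.continuous)
      fun ℓ _ hℓ ↦ hf ℓ hℓ
  exact (Set.biInter_subset_of_mem hlt).trans <| closedConvexHull_min
    (Set.image_subset_iff.2 fun _ hi ↦ le_of_lt hi)
    (convex_halfSpace_le f.toLinearMap.isLinear u) (isClosed_le f.continuous continuous_const)

variable [AddCommGroup E] [Module ℝ E] [TopologicalSpace E] [IsTopologicalAddGroup E]
  [ContinuousSMul ℝ E]

theorem iInter_closedConvexHull_image_eq_closedConvexHull_mapClusterPt [LocallyConvexSpace ℝ E]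
    (hK : IsCompact K) (hx : ∀ᶠ i in F, x i ∈ K) :
    ⋂ s ∈ F, closedConvexHull ℝ (x '' s) = closedConvexHull ℝ {ℓ | MapClusterPt ℓ F x} := by
  refine Set.Subset.antisymm (fun y hy ↦ ?_) closedConvexHull_mapClusterPt_subset_iInter
  by_contra hy_hull
  obtain ⟨f, u, hfu, huy⟩ :=
    geometric_hahn_banach_closed_point convex_closedConvexHull isClosed_closedConvexHull hy_hull
  have hyu : f y ≤ u := iInter_closedConvexHull_image_subset_halfSpace f hK hx
    (fun ℓ hℓ ↦ hfu ℓ (subset_closedConvexHull hℓ)) hy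
  exact hyu.not_gt huy

theorem pcore_eq_convexHull_pringsheim_clusterPts_general [T2Space E] [FiniteDimensional ℝ E]
    (hK : IsCompact K) (hx : ∀ᶠ i in F, x i ∈ K) :
    ⋂ s ∈ F, closedConvexHull ℝ (x '' s) = convexHull ℝ {ℓ | MapClusterPt ℓ F x} := by
  have : LocallyConvexSpace ℝ E := locallyConvexSpace_of_finiteDimensional
  have hclosed : IsClosed (convexHull ℝ {ℓ | MapClusterPt ℓ F x}) :=
    (isCompact_convexHull ℝ (isCompact_setOfPred_mapClusterPt hK hx)).isClosed
  rw [iInter_closedConvexHull_image_eq_closedConvexHull_mapClusterPt hK hx,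
    closedConvexHull_eq_closure_convexHull, hclosed.closure_eq]

end Core

/-- Proposition 4.3: the P-core of a bounded double sequence with values in `ℝ^k` equals
the convex hull of its set of Pringsheim cluster points. The Pringsheim ideal is
represented by its dual filter `atTop ×ˢ atTop` on `ℕ × ℕ`. -/
theorem pcore_eq_convexHull_pringsheim_clusterPts
    {k : ℕ} (x : ℕ × ℕ → EuclideanSpace ℝ (Fin k))
    (hx : ∃ C : ℝ, ∀ p : ℕ × ℕ, ‖x p‖ ≤ C) :
    ⋂ E ∈ (atTop ×ˢ atTop : Filter (ℕ × ℕ)), closedConvexHull ℝ (x '' E) =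
      convexHull ℝ
        {ℓ : EuclideanSpace ℝ (Fin k) | MapClusterPt ℓ (atTop ×ˢ atTop : Filter (ℕ × ℕ)) x} := by
  obtain ⟨C, hC⟩ := hx
  exact pcore_eq_convexHull_pringsheim_clusterPts_general (isCompact_closedBall 0 C)
    (.of_forall fun p ↦ mem_closedBall_zero_iff.2 (hC p))
end
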